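/- Let A be an abelian group that contains a subgroup isomorphic to the Baer–Specker group ℤ^ω (by Nunke's characterisation of slender groups, this holds for every non-slender ℵ₁-free abelian group). Then there exists a family (G_α)_{α ∈ I} of subgroups of A, indexed by a set I of cardinality 2^{ℵ₁}, such that: (i) each G_α is ℵ₁-free, of cardinality ℵ₁, and not free; and (ii) whenever α ≠ β, the groups G_α and G_β are almost disjoint. -/

import Mathlib

universe u

/-!
Fix a set `W` of order type `ω₁`. To a family `P : W → Set ℤ` of infinite, pairwise almost disjoint
sets of primes we attach a group `pairs P` (`Admissible`, `pairs`): it consists of the pairs `(g, q)`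
with `g : ℕ → ℤ` and `q : W →₀ ℚ`, where `q i` has a squarefree denominator composed of primes from
`P i`, and where `g n = ∑_{i : n ∈ P i} q i * n!` for all large `n`. The factorial makes every such
`q` occur. The first projection to `ℕ → ℤ` is injective, because `q i` can be recovered from `g n`
for large `n ∈ P i`; hence `pairs P` embeds in `A`, and it is `ℵ₁`-free by Specker's theorem
(`free_of_injective_pi`). The second projection has countable kernel, the finitely supported
sequences, so `pairs P` has cardinality `ℵ₁` (`mk_pairs`). It is not free (`not_free_pairs`): for a
basis, all but countably many coordinates vanish on the kernel, hence on the `ℵ₁` many lifts of the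
unit vectors, which are divisible by infinitely many primes modulo the kernel.

For `P` and `P'` such that `P i ∩ P' j` is finite for all `j` and all `i` outside a countable set,
any common subgroup `H` of `pairs P` and `pairs P'` is free (`free_of_two_maps`). Indeed `H` is
exhausted by an increasing continuous chain of subgroups, each of which is defined both by a
condition that the support of the first `q` lies in some `D` and by a condition that the support of
the second `q` lies in some `D'`; the chain starts with a countable subgroup and has countable
quotients. Each quotient embeds both in a direct sum of copies of `ℚ` with denominators from the
`P i` and in one with denominators from the `P' j`. On the pure closure of a finitely generated
subgroup the two denominators have bounded gcd, so this pure closure is finitely generated, and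
Pontryagin's criterion (`pontryagin`) shows that the quotient is free.

Finally, to `X ⊆ W` one attaches the family `P X` where `P X w` is taken from a fixed almost
disjoint system of sets of primes indexed by the branches of the binary tree, the branch being a code
of `w` and `X ∩ Iio w`. For `X ≠ Y` these codes differ for all but countably many `w`
(`exists_family`), which gives `2^ℵ₁` pairwise almost disjoint groups.
-/

namespace AlmostDisjoint
open Submodule Set

/-! ### Freeness by transfinite exhaustion -/

variable {R : Type*} [CommRing R]

/-- A module is free if it is exhausted by a family of submodules that is closed under unions of
nonempty chains, contains a free member, and in which every proper member has a strictly larger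
member with free relative quotient. -/
theorem free_of_family {M : Type*} [AddCommGroup M] [Module R M] (F : Set (Submodule R M))
    (h0 : ∃ N ∈ F, Module.Free R N)
    (hchain : ∀ c ⊆ F, c.Nonempty → IsChain (· ≤ ·) c → sSup c ∈ F)
    (hstep : ∀ N ∈ F, N ≠ ⊤ → ∃ N' ∈ F, N < N' ∧ Module.Free R (N'.map N.mkQ)) :
    Module.Free R M := by
  obtain ⟨N₀, hN₀, hfree⟩ := h0
  let S : Set (Set M) := {B | LinearIndepOn R id B ∧ span R B ∈ F}
  let b₀ := Module.Free.chooseBasis R N₀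
  have hb₀ : range (fun i => (b₀ i : M)) ∈ S := by
    constructor
    · exact (b₀.linearIndependent.map' N₀.subtype N₀.ker_subtype).linearIndepOn_id
    · have : span R (range fun i => (b₀ i : M)) = N₀ := by
        have h := congrArg (Submodule.map N₀.subtype) b₀.span_eq
        rw [Submodule.map_span, ← range_comp] at h
        simpa using! h
      rwa [this]
  -- A maximal independent set `B` whose span is in `F`.
  obtain ⟨B, -, hB⟩ := zorn_subset_nonempty S (by
    intro c hc hch hne
    refine ⟨⋃₀ c, ⟨linearIndepOn_sUnion_of_directed hch.directedOn fun a ha => (hc ha).1, ?_⟩,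
      fun s hs => subset_sUnion_of_mem hs⟩
    have : span R (⋃₀ c) = sSup (span R '' c) := by
      rw [sUnion_eq_biUnion, span_iUnion₂, sSup_image]
    rw [this]
    refine hchain _ ?_ (hne.image _) ?_
    · rintro _ ⟨s, hs, rfl⟩
      exact (hc hs).2
    · rintro _ ⟨s, hs, rfl⟩ _ ⟨t, ht, rfl⟩ _
      exact (hch.total hs ht).imp (fun h => span_mono h) fun h => span_mono h) _ hb₀
  by_cases htop : span R B = ⊤
  · exact Module.Free.of_basis (Module.Basis.mk (v := fun i : B => (i : M)) hB.prop.1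
      (by simpa using htop.ge))
  exfalso
  obtain ⟨N', hN', hlt, hfr⟩ := hstep _ hB.prop.2 htop
  let b := Module.Free.chooseBasis R (N'.map (span R B).mkQ)
  have hv : ∀ i, ∃ x ∈ N', (span R B).mkQ x = b i := fun i => (b i).2
  choose v hvN hv using hv
  have hli : LinearIndependent R (Sum.elim (fun i : B => (i : M)) v) := by
    refine LinearIndependent.sumElim_of_quotient (M' := span R B)
      (f := fun i : B => ⟨i, subset_span i.2⟩) ?_ v ?_
    · exact LinearIndependent.of_comp (span R B).subtype hB.prop.1
    · have := b.linearIndependent.map' (Submodule.subtype _) (Submodule.ker_subtype _)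
      convert! this using 1
      ext i
      exact hv i
  have hspan : span R (B ∪ range v) = N' := by
    refine le_antisymm (span_le.2 (union_subset (subset_span.trans hlt.le) ?_)) fun x hx => ?_
    · rintro _ ⟨i, rfl⟩
      exact hvN i
    · have hx' : (⟨(span R B).mkQ x, mem_map_of_mem hx⟩ : N'.map (span R B).mkQ) ∈
        span R (range b) := by rw [b.span_eq]; trivial
      have h2 := mem_map_of_mem (f := Submodule.subtype _) hx'
      rw [Submodule.map_span, ← range_comp] at h2
      have h3 : range ((Submodule.subtype (N'.map (span R B).mkQ)) ∘ b) =
          (span R B).mkQ '' range v := by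
        rw [← range_comp]; congr 1; ext i; exact (hv i).symm
      rw [h3, ← Submodule.map_span] at h2
      obtain ⟨y, hy, hyx⟩ := h2
      have : x - y ∈ span R B := by
        rw [← Submodule.ker_mkQ (span R B), LinearMap.mem_ker, map_sub, hyx]
        simp
      rw [span_union]
      exact mem_sup.2 ⟨_, this, _, hy, by abel⟩
  have hmem : B ∪ range v ∈ S := by
    refine ⟨?_, by rwa [hspan]⟩
    have := hli.linearIndepOn_id
    simpa [Set.Sum.elim_range] using this
  have := hB.eq_of_subset hmem subset_union_left
  rw [← this] at hspan
  exact hlt.ne hspan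

/-! ### Denominators taken from a prescribed set -/

variable {K : Type*} [AddCommGroup K] [Module R K]

/-- `x` becomes a multiple of `u` after multiplication by a product of distinct elements of `S`. For
`u = 1` in `ℚ` and a set `S` of primes: the denominator of `x` is a squarefree product of primes
from `S`. -/
def HasDen (u : K) (S : Set R) (x : K) : Prop :=
  ∃ s : Finset R, ↑s ⊆ S ∧ (∏ r ∈ s, r) • x ∈ span R {u}

open Classical in
/-- A finitely supported vector with denominators from the sets `P i` has a common denominator, which
is a product of distinct elements of the union of the relevant `P i`. -/
theorem exists_common_den {ι : Type*} (u : K) (P : ι → Set R) (E : Finset ι) (q : ι →₀ K)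
    (hE : q ∈ Finsupp.supported K R (E : Set ι)) (hq : ∀ i, HasDen u (P i) (q i)) :
    ∃ s : Finset R, ↑s ⊆ (⋃ i ∈ E, P i) ∧
      (∏ r ∈ s, r) • q ∈ span R ((fun i => Finsupp.single i u) '' (E : Set ι)) := by
  choose s hs hsq using hq
  refine ⟨E.biUnion s, ?_, ?_⟩
  · intro r hr
    obtain ⟨i, hi, hr⟩ := Finset.mem_biUnion.1 (Finset.mem_coe.1 hr)
    exact mem_iUnion₂.2 ⟨i, hi, hs i hr⟩
  · have hsum : q = ∑ i ∈ E, Finsupp.single i (q i) :=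
      (Finsupp.sum_single q).symm.trans
        (Finsupp.sum_of_support_subset q (Finset.coe_subset.1 ((Finsupp.mem_supported R q).1 hE))
          _ fun i _ => Finsupp.single_zero i)
    rw [hsum, Finset.smul_sum]
    refine sum_mem fun i hi => ?_
    have hdvd : (∏ r ∈ s i, r) ∣ ∏ r ∈ E.biUnion s, r :=
      Finset.prod_dvd_prod_of_subset _ _ _ (Finset.subset_biUnion_of_mem s hi)
    obtain ⟨c, hc⟩ := hdvd
    have : (∏ r ∈ E.biUnion s, r) • q i ∈ span R {u} := by
      rw [hc, mul_comm, mul_smul]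
      exact smul_mem _ _ (hsq i)
    obtain ⟨a, ha⟩ := mem_span_singleton.1 this
    rw [Finsupp.smul_single, ← ha, ← Finsupp.smul_single]
    exact smul_mem _ _ (subset_span ⟨i, hi, rfl⟩)

/-! ### Submodules cut out by conditions on supports -/

section Closing

variable {H ι ι' : Type*} [AddCommGroup H] [Module R H]

/-- The submodule of those `h` for which the support of `κ h` is contained in `D`. -/
noncomputable def suppIn (κ : H →ₗ[R] (ι →₀ K)) (D : Set ι) : Submodule R H :=
  (Finsupp.supported K R D).comap κ

theorem mem_suppIn {κ : H →ₗ[R] (ι →₀ K)} {D : Set ι} {h : H} :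
    h ∈ suppIn κ D ↔ ↑(κ h).support ⊆ D := Iff.rfl

theorem suppIn_mono (κ : H →ₗ[R] (ι →₀ K)) {D D' : Set ι} (h : D ⊆ D') :
    suppIn κ D ≤ suppIn κ D' := fun _ hx => Subset.trans hx h

theorem countable_supported [Countable K] {Z : Set ι} (hZ : Z.Countable) :
    {q : ι →₀ K | ↑q.support ⊆ Z}.Countable := by
  have := hZ.to_subtype
  have : Countable (Finsupp.supported K ℤ Z) :=
    (Finsupp.supportedEquivFinsupp (M := K) (R := ℤ) Z).injective.countable
  exact Set.countable_coe_iff.1 this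

/-- If `suppIn κ D` is contained in `suppIn κ' D'` up to countably many indices, then this remains
so after adding countably many indices to `D`. -/
theorem exists_countable_bound [Countable K] (κ : H →ₗ[R] (ι →₀ K)) (κ' : H →ₗ[R] (ι' →₀ K))
    (D : Set ι) (D' : Set ι')
    (hbase : ∃ Z' : Set ι', Z'.Countable ∧ suppIn κ D ≤ suppIn κ' (D' ∪ Z'))
    {Z : Set ι} (hZ : Z.Countable) :
    ∃ Z' : Set ι', Z'.Countable ∧ suppIn κ (D ∪ Z) ≤ suppIn κ' (D' ∪ Z') := by
  classical
  obtain ⟨Z', hZ', hle⟩ := hbase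
  -- `ρ` takes countably many values on `suppIn κ (D ∪ Z)`, and two elements with the same value
  -- differ by an element of `suppIn κ D`; so countably many representatives `A` suffice.
  let ρ : H → (ι →₀ K) := fun h => (κ h).filter (· ∉ D)
  have hT : (ρ '' (suppIn κ (D ∪ Z) : Set H)).Countable := by
    refine (countable_supported hZ).mono ?_
    rintro _ ⟨h, hh, rfl⟩ i hi
    have hi' := Finset.mem_coe.1 hi
    rw [Finsupp.support_filter, Finset.mem_filter] at hi'
    exact (hh hi'.1).resolve_left hi'.2
  obtain ⟨A, hA, hAim⟩ := (Set.exists_subset_bijOn (suppIn κ (D ∪ Z) : Set H) ρ)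
  have hAc : A.Countable := by
    rw [← hAim.image_eq] at hT
    exact countable_of_injective_of_countable_image hAim.injOn hT
  refine ⟨Z' ∪ ⋃ h ∈ A, ((κ' h).support : Set ι'),
    hZ'.union (hAc.biUnion fun h _ => Finset.countable_toSet _), fun h hh => ?_⟩
  obtain ⟨a, ha, hah⟩ := hAim.surjOn ⟨h, hh, rfl⟩
  have h1 : h - a ∈ suppIn κ D := by
    intro i hi
    by_contra hiD
    have := DFunLike.congr_fun hah i
    simp only [ρ, Finsupp.filter_apply_pos (· ∉ D) _ hiD] at this
    rw [Finset.mem_coe, Finsupp.mem_support_iff, map_sub, Finsupp.sub_apply, this, sub_self] at hi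
    exact hi rfl
  have h2 := hle h1
  have h3 : a ∈ suppIn κ' (D' ∪ (Z' ∪ ⋃ h ∈ A, ((κ' h).support : Set ι'))) := fun i hi =>
    Or.inr (Or.inr (mem_iUnion₂.2 ⟨a, ha, hi⟩))
  have h4 := add_mem (suppIn_mono κ' (union_subset_union_right D' subset_union_left) h2) h3
  rwa [sub_add_cancel] at h4

/-- Closing off: above a pair `(D, D')` whose submodules agree up to countably many indices there is,
for each countable `Z`, a pair defining the same submodule, with `D` enlarged by a countable set
containing `Z`. -/
theorem exists_closed [Countable K] (κ : H →ₗ[R] (ι →₀ K)) (κ' : H →ₗ[R] (ι' →₀ K))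
    (D : Set ι) (D' : Set ι')
    (hbase : ∃ Z' : Set ι', Z'.Countable ∧ suppIn κ D ≤ suppIn κ' (D' ∪ Z'))
    (hbase' : ∃ Z : Set ι, Z.Countable ∧ suppIn κ' D' ≤ suppIn κ (D ∪ Z))
    {Z : Set ι} (hZ : Z.Countable) :
    ∃ (Z₁ : Set ι) (Z₁' : Set ι'), Z₁.Countable ∧ Z ⊆ Z₁ ∧
      suppIn κ (D ∪ Z₁) = suppIn κ' (D' ∪ Z₁') := by
  have hf : ∀ Z : {Z : Set ι // Z.Countable}, ∃ Z' : {Z' : Set ι' // Z'.Countable},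
      suppIn κ (D ∪ Z) ≤ suppIn κ' (D' ∪ Z') := fun Z => by
    obtain ⟨Z', h1, h2⟩ := exists_countable_bound κ κ' D D' hbase Z.2
    exact ⟨⟨Z', h1⟩, h2⟩
  have hg : ∀ Z' : {Z' : Set ι' // Z'.Countable}, ∃ Z : {Z : Set ι // Z.Countable},
      suppIn κ' (D' ∪ Z') ≤ suppIn κ (D ∪ Z) := fun Z' => by
    obtain ⟨Z, h1, h2⟩ := exists_countable_bound κ' κ D' D hbase' Z'.2
    exact ⟨⟨Z, h1⟩, h2⟩
  choose f hf using hf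
  choose g hg using hg
  -- Enlarge the two countable sets alternately, and take unions after `ω` steps.
  let z : ℕ → {Z : Set ι // Z.Countable} × {Z' : Set ι' // Z'.Countable} := fun n =>
    Nat.rec (⟨Z, hZ⟩, ⟨∅, countable_empty⟩)
      (fun _ p => (⟨p.1 ∪ g p.2, p.1.2.union (g p.2).2⟩, ⟨p.2 ∪ f p.1, p.2.2.union (f p.1).2⟩)) n
  have hz1 : Monotone fun n => D ∪ ((z n).1 : Set ι) :=
    monotone_nat_of_le_succ fun n => union_subset_union_right D subset_union_left
  have hz2 : Monotone fun n => D' ∪ ((z n).2 : Set ι') :=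
    monotone_nat_of_le_succ fun n => union_subset_union_right D' subset_union_left
  refine ⟨⋃ n, (z n).1, ⋃ n, (z n).2, countable_iUnion fun n => (z n).1.2,
    subset_iUnion (fun n => ((z n).1 : Set ι)) 0, le_antisymm ?_ ?_⟩
  · intro h hh
    rw [mem_suppIn, union_iUnion] at hh
    obtain ⟨n, hn⟩ := hz1.directed_le.exists_mem_subset_of_finset_subset_biUnion hh
    refine suppIn_mono κ' (union_subset_union_right D' ?_) (hf _ (mem_suppIn.2 hn))
    exact Subset.trans subset_union_right (subset_iUnion (fun n => ((z n).2 : Set ι')) (n + 1))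
  · intro h hh
    rw [mem_suppIn, union_iUnion] at hh
    obtain ⟨n, hn⟩ := hz2.directed_le.exists_mem_subset_of_finset_subset_biUnion hh
    refine suppIn_mono κ (union_subset_union_right D ?_) (hg _ (mem_suppIn.2 hn))
    exact Subset.trans subset_union_right (subset_iUnion (fun n => ((z n).1 : Set ι)) (n + 1))

theorem countable_suppIn [Countable K] (κ : H →ₗ[R] (ι →₀ K))
    (hker : (LinearMap.ker κ : Set H).Countable)
    {Z : Set ι} (hZ : Z.Countable) : (suppIn κ Z : Set H).Countable := by
  have : (suppIn κ Z : Set H) ⊆ ⋃ q ∈ {q : ι →₀ K | ↑q.support ⊆ Z}, κ ⁻¹' {q} := fun h hh =>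
    mem_iUnion₂.2 ⟨κ h, hh, rfl⟩
  refine ((countable_supported hZ).biUnion fun q _ => ?_).mono this
  rcases (κ ⁻¹' {q}).eq_empty_or_nonempty with h | ⟨a, ha⟩
  · rw [h]; exact countable_empty
  · refine (hker.image (a + ·)).mono fun x hx => ?_
    refine ⟨x - a, ?_, add_sub_cancel a x⟩
    have ha : κ a = q := ha
    have hx : κ x = q := hx
    simp [ha, hx]

/-- Submodules of the form `suppIn κ D` with `Δ ⊆ D` are closed under unions of nonempty chains. -/
theorem suppIn_sSup (κ : H →ₗ[R] (ι →₀ K)) (Δ : Set ι) (c : Set (Submodule R H))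
    (hne : c.Nonempty) (hch : IsChain (· ≤ ·) c) (hc : ∀ N ∈ c, ∃ D, Δ ⊆ D ∧ N = suppIn κ D) :
    ∃ D, Δ ⊆ D ∧ sSup c = suppIn κ D := by
  let S : Submodule R H → Set ι := fun N => Δ ∪ ⋃ h ∈ N, ((κ h).support : Set ι)
  have hS : Monotone S := fun N N' h => union_subset_union_right _
    (iUnion₂_mono' fun x hx => ⟨x, h hx, Subset.rfl⟩)
  refine ⟨⋃ N ∈ c, S N, ?_, le_antisymm (sSup_le fun N hN h hh i hi => ?_) fun h hh => ?_⟩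
  · obtain ⟨N, hN⟩ := hne
    exact Subset.trans subset_union_left (subset_biUnion_of_mem (u := S) hN)
  · exact mem_iUnion₂.2 ⟨N, hN, Or.inr (mem_iUnion₂.2 ⟨h, hh, hi⟩)⟩
  · rw [mem_suppIn, biUnion_eq_iUnion] at hh
    have := hne.to_subtype
    have hdir : Directed (· ⊆ ·) fun N : c => S N := fun N N' => by
      rcases hch.total N.2 N'.2 with h | h
      · exact ⟨N', hS h, Subset.rfl⟩
      · exact ⟨N, Subset.rfl, hS h⟩
    obtain ⟨⟨N, hN⟩, hn⟩ := hdir.exists_mem_subset_of_finset_subset_biUnion hh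
    obtain ⟨D, hΔ, rfl⟩ := hc N hN
    have hle : suppIn κ D ≤ sSup c := le_sSup hN
    refine hle (mem_suppIn.2 (hn.trans (union_subset hΔ (iUnion₂_subset fun x hx => hx))))

/-- The coordinates outside `D` embed the quotient by `suppIn κ D`. -/
theorem exists_offMap (κ : H →ₗ[R] (ι →₀ K)) (D : Set ι) (N : Submodule R H)
    (hN : N = suppIn κ D) :
    ∃ f : (H ⧸ N) →ₗ[R] (↥(Dᶜ) →₀ K), Function.Injective f ∧
      ∀ x (i : ↥(Dᶜ)), f (N.mkQ x) i = κ x i := by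
  let g : H →ₗ[R] (↥(Dᶜ) →₀ K) := Finsupp.lsubtypeDomain Dᶜ ∘ₗ κ
  have hg : ∀ x (i : ↥(Dᶜ)), g x i = κ x i := fun x i => rfl
  have hker : LinearMap.ker g = N := by
    ext x
    rw [hN, suppIn, mem_comap, Finsupp.mem_supported', LinearMap.mem_ker, Finsupp.ext_iff]
    exact ⟨fun h i hi => h ⟨i, hi⟩, fun h i => h i i.2⟩
  exact ⟨N.liftQ g hker.ge, LinearMap.ker_eq_bot.1 (ker_liftQ_eq_bot _ _ _ hker.le), hg⟩

end Closing

/-! ### Countable modules: the criteria of Pontryagin and Specker -/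

variable [IsDomain R]

/-- The pure closure of `F`: all elements with a nonzero multiple in `F`. -/
def pureClosure {M : Type*} [AddCommGroup M] [Module R M] (F : Submodule R M) : Submodule R M where
  carrier := {m | ∃ n : R, n ≠ 0 ∧ n • m ∈ F}
  zero_mem' := ⟨1, one_ne_zero, by simp⟩
  add_mem' := by
    rintro a b ⟨m, hm, ha⟩ ⟨n, hn, hb⟩
    refine ⟨m * n, mul_ne_zero hm hn, ?_⟩
    rw [smul_add, mul_comm, mul_smul, mul_comm, mul_smul]
    exact F.add_mem (F.smul_mem _ ha) (F.smul_mem _ hb)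
  smul_mem' := by
    rintro c x ⟨n, hn, hx⟩
    exact ⟨n, hn, by rw [smul_comm]; exact F.smul_mem _ hx⟩

theorem isTorsionFree_quotient_pureClosure {M : Type*} [AddCommGroup M] [Module R M]
    (F : Submodule R M) : Module.IsTorsionFree R (M ⧸ pureClosure F) := by
  refine Module.IsTorsionFree.of_smul_eq_zero fun r m h => ?_
  obtain ⟨x, rfl⟩ := (pureClosure F).mkQ_surjective m
  by_cases hr : r = 0
  · exact Or.inl hr
  right
  rw [← map_smul, ← LinearMap.mem_ker, ker_mkQ] at h
  obtain ⟨n, hn, hx⟩ := h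
  rw [← LinearMap.mem_ker, ker_mkQ]
  exact ⟨n * r, mul_ne_zero hn hr, by rwa [mul_smul]⟩

theorem le_pureClosure {M : Type*} [AddCommGroup M] [Module R M] (F : Submodule R M) :
    F ≤ pureClosure F := fun x hx => ⟨1, one_ne_zero, by simpa⟩

variable [IsPrincipalIdealRing R]

/-- Pontryagin's criterion: a countable torsion-free module over a principal ideal domain is free as
soon as the pure closure of each finitely generated submodule is finitely generated. -/
theorem pontryagin {M : Type*} [AddCommGroup M] [Module R M] [Module.IsTorsionFree R M]
    [Countable M]
    (h : ∀ F : Submodule R M, F.FG → (pureClosure F).FG) : Module.Free R M := by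
  obtain ⟨e, he⟩ := exists_surjective_nat M
  let L : ℕ → Submodule R M := fun n => pureClosure (span R (e '' Iio n))
  have hLfg : ∀ n, (L n).FG := fun n => h _ (fg_span ((finite_Iio n).image e))
  have hLmono : Monotone L := fun m n hmn x ⟨k, hk, hx⟩ =>
    ⟨k, hk, span_mono (image_mono (Iio_subset_Iio hmn)) hx⟩
  have hLtop : ∀ x, ∃ n, x ∈ L n := fun x => by
    obtain ⟨n, rfl⟩ := he x
    exact ⟨n + 1, le_pureClosure _ (subset_span ⟨n, by simp, rfl⟩)⟩
  refine free_of_family (insert ⊤ (range L)) ⟨L 0, Or.inr ⟨0, rfl⟩, ?_⟩ ?_ ?_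
  · have := Module.Finite.iff_fg.2 (hLfg 0)
    infer_instance
  · intro c hc hne hch
    by_cases hb : BddAbove {n | L n ∈ c}
    · by_cases ht : ⊤ ∈ c
      · left
        exact top_le_iff.1 (le_sSup ht)
      right
      have hc' : ∀ N ∈ c, ∃ n, L n = N := fun N hN => by
        rcases hc hN with rfl | h
        · exact (ht hN).elim
        · exact h
      have hne' : {n | L n ∈ c}.Nonempty := by
        obtain ⟨N, hN⟩ := hne
        obtain ⟨n, rfl⟩ := hc' N hN
        exact ⟨n, hN⟩
      have hm := Nat.sSup_mem hne' hb
      refine ⟨_, le_antisymm (le_sSup hm) (sSup_le fun N hN => ?_)⟩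
      obtain ⟨n, rfl⟩ := hc' N hN
      exact hLmono (le_csSup hb hN)
    · left
      refine top_le_iff.1 fun x _ => ?_
      obtain ⟨n, hn⟩ := hLtop x
      obtain ⟨m, hm, hnm⟩ := not_bddAbove_iff.1 hb n
      have hle : L m ≤ sSup c := le_sSup hm
      exact hle (hLmono hnm.le hn)
  · rintro N (rfl | ⟨n, rfl⟩) hN
    · exact (hN rfl).elim
    · obtain ⟨x, hx⟩ : ∃ x, x ∉ L n := by
        by_contra! hcon
        exact hN (top_le_iff.1 fun x _ => hcon x)
      obtain ⟨k, hk⟩ := hLtop x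
      have hnk : L n ≤ L k := hLmono (by
        by_contra! hkn
        exact hx (hLmono hkn.le hk))
      refine ⟨L k, Or.inr ⟨k, rfl⟩, lt_of_le_not_ge hnk fun h => hx (h hk), ?_⟩
      have := isTorsionFree_quotient_pureClosure (span R (e '' Iio n))
      have : Module.Finite R ((L k).map (L n).mkQ) := Module.Finite.iff_fg.2 ((hLfg k).map _)
      have : Module.IsTorsionFree R ((L k).map (L n).mkQ) :=
        Submodule.instIsTorsionFree (M := M ⧸ L n) _
      exact Module.free_of_finite_type_torsion_free'

/-- Specker's theorem: countable submodules of `ℕ → R` are free. -/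
theorem free_of_injective_pi {M : Type*} [AddCommGroup M] [Module R M] [Countable M]
    (f : M →ₗ[R] (ℕ → R)) (hf : Function.Injective f) : Module.Free R M := by
  have : Module.IsTorsionFree R M := hf.moduleIsTorsionFree f (map_smul f)
  refine pontryagin fun F hF => ?_
  have := Module.Finite.iff_fg.2 hF
  let ev : ℕ → (F →ₗ[R] R) := fun n => LinearMap.proj n ∘ₗ f ∘ₗ F.subtype
  let V : ℕ →o Submodule R (F →ₗ[R] R) :=
    ⟨fun k => span R (ev '' Iio k), fun a b hab => span_mono (image_mono (Iio_subset_Iio hab))⟩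
  -- Finitely many coordinates generate all coordinate functionals on `F`, so they determine `F`.
  obtain ⟨k, hk⟩ := monotone_stabilizes_iff_noetherian.2 inferInstance V
  have hev : ∀ n, ev n ∈ span R (ev '' Iio k) := fun n => by
    have h1 : ev n ∈ V (max k (n + 1)) := subset_span ⟨n, by simp, rfl⟩
    rw [← hk _ (le_max_left _ _)] at h1
    exact h1
  have hzero : ∀ x ∈ F, (∀ i < k, f x i = 0) → x = 0 := by
    intro x hx hi
    apply hf
    rw [map_zero]
    ext n
    have : span R (ev '' Iio k) ≤ LinearMap.ker (LinearMap.applyₗ (⟨x, hx⟩ : F)) := by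
      rw [span_le]
      rintro _ ⟨i, hik, rfl⟩
      exact hi i hik
    exact this (hev n)
  let g : pureClosure F →ₗ[R] (Fin k → R) :=
    LinearMap.pi fun i => LinearMap.proj (i : ℕ) ∘ₗ f ∘ₗ (pureClosure F).subtype
  have hg : Function.Injective g := by
    rw [injective_iff_map_eq_zero]
    rintro ⟨x, n, hn, hx⟩ h
    have : n • x = 0 := hzero _ hx fun i hi => by
      have : f x i = 0 := congrFun h ⟨i, hi⟩
      rw [map_smul, Pi.smul_apply, this, smul_zero]
    ext
    exact (smul_eq_zero.1 this).resolve_left hn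
  have := Module.Finite.of_injective g hg
  exact Module.Finite.iff_fg.1 this


/-! ### Modules with two incompatible systems of denominators -/

open Classical in
/-- Elements of the pure closure of a finitely generated `F` are brought into a fixed finitely
generated submodule by denominators from finitely many of the sets `P i`. -/
theorem exists_fg_of_embedding {Q : Type*} [AddCommGroup Q] [Module R Q]
    [Module.IsTorsionFree R K] {ι : Type*} (u : K) (P : ι → Set R)
    (κ : Q →ₗ[R] (ι →₀ K)) (hinj : Function.Injective κ)
    (hκ : ∀ x i, HasDen u (P i) (κ x i)) (F : Submodule R Q) (hF : F.FG) :
    ∃ (E : Finset ι) (L₀ : Submodule R Q), L₀.FG ∧ ∀ x ∈ pureClosure F,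
      ∃ s : Finset R, ↑s ⊆ (⋃ i ∈ E, P i) ∧ (∏ r ∈ s, r) • x ∈ L₀ := by
  obtain ⟨T, hT⟩ := hF
  let E : Finset ι := T.biUnion fun t => (κ t).support
  have h1 : F ≤ (Finsupp.supported K R (E : Set ι)).comap κ := by
    rw [← hT, span_le]
    intro t ht
    exact Finset.coe_subset.2 (Finset.subset_biUnion_of_mem (fun t => (κ t).support) ht)
  let S := span R ((fun i => Finsupp.single i u) '' (E : Set ι))
  have hS : S.FG := fg_span (E.finite_toSet.image _)
  refine ⟨E, S.comap κ, ?_, fun x hx => ?_⟩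
  · refine fg_of_fg_map_injective κ hinj ?_
    have : IsNoetherian R S := isNoetherian_of_fg_of_noetherian _ hS
    exact isNoetherian_submodule.1 this _ (map_comap_le κ S)
  · obtain ⟨n, hn, hx⟩ := hx
    have h2 : κ x ∈ Finsupp.supported K R (E : Set ι) := by
      have h2 := h1 hx
      rw [mem_comap, map_smul, Finsupp.mem_supported'] at h2
      rw [Finsupp.mem_supported']
      intro i hi
      exact (smul_eq_zero.1 (h2 i hi)).resolve_left hn
    obtain ⟨s, hs, h⟩ := exists_common_den u P E (κ x) h2 (hκ x)
    exact ⟨s, hs, by rwa [mem_comap, map_smul]⟩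

open Classical in
/-- A countable module is free if it embeds into finitely supported functions with denominators from
the sets `P i`, and also with denominators from the sets `P' j`, where `P i ∩ P' j` is always finite
and distinct elements of `P i` and `P' j` are coprime. -/
theorem free_of_two_embeddings {Q : Type*} [AddCommGroup Q] [Module R Q] [Countable Q]
    [Module.IsTorsionFree R K] {ι ι' : Type*} (u : K) (P : ι → Set R) (P' : ι' → Set R)
    (h0 : ∀ i, 0 ∉ P i)
    (hcop : ∀ i j, ∀ a ∈ P i, ∀ b ∈ P' j, a ≠ b → IsCoprime a b)
    (hfin : ∀ i j, (P i ∩ P' j).Finite)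
    (κ : Q →ₗ[R] (ι →₀ K)) (κ' : Q →ₗ[R] (ι' →₀ K))
    (hinj : Function.Injective κ) (hinj' : Function.Injective κ')
    (hκ : ∀ x i, HasDen u (P i) (κ x i)) (hκ' : ∀ x i, HasDen u (P' i) (κ' x i)) :
    Module.Free R Q := by
  have htf : Module.IsTorsionFree R Q := hinj.moduleIsTorsionFree κ (map_smul κ)
  refine pontryagin fun F hF => ?_
  obtain ⟨E, L, hL, hE⟩ := exists_fg_of_embedding u P κ hinj hκ F hF
  obtain ⟨E', L', hL', hE'⟩ := exists_fg_of_embedding u P' κ' hinj' hκ' F hF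
  have hW : ((⋃ i ∈ E, P i) ∩ ⋃ j ∈ E', P' j).Finite := by
    have : ((⋃ i ∈ E, P i) ∩ ⋃ j ∈ E', P' j) ⊆ ⋃ i ∈ E, ⋃ j ∈ E', (P i ∩ P' j) := by
      rintro r ⟨h1, h2⟩
      simp only [mem_iUnion] at h1 h2 ⊢
      obtain ⟨i, hi, h1⟩ := h1
      obtain ⟨j, hj, h2⟩ := h2
      exact ⟨i, hi, j, hj, h1, h2⟩
    exact (E.finite_toSet.biUnion fun i _ => E'.finite_toSet.biUnion fun j _ => hfin i j).subset
      this
  -- Only the finitely many elements common to both unions obstruct coprimality; `d` is their product.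
  let d : R := ∏ r ∈ hW.toFinset, r
  have hd : d ≠ 0 := Finset.prod_ne_zero_iff.2 fun r hr hr0 => by
    rw [Finite.mem_toFinset] at hr
    obtain ⟨i, -, hi⟩ := mem_iUnion₂.1 hr.1
    exact h0 i (hr0 ▸ hi)
  have hdL : ∀ x ∈ pureClosure F, d • x ∈ L ⊔ L' := by
    intro x hx
    obtain ⟨s, hs, hsx⟩ := hE x hx
    obtain ⟨t, ht, htx⟩ := hE' x hx
    have hc : IsCoprime (∏ r ∈ s \ t, r) (∏ r ∈ t \ s, r) := by
      refine IsCoprime.prod_left fun a ha => IsCoprime.prod_right fun b hb => ?_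
      rw [Finset.mem_sdiff] at ha hb
      obtain ⟨i, -, hi⟩ := mem_iUnion₂.1 (hs ha.1)
      obtain ⟨j, -, hj⟩ := mem_iUnion₂.1 (ht hb.1)
      exact hcop i j a hi b hj fun h => hb.2 (h ▸ ha.1)
    -- The gcd of the two denominators `∏ s` and `∏ t` is `∏ (s ∩ t)`, which divides `d`; by Bézout
    -- `d • x` is a combination of `(∏ s) • x ∈ L` and `(∏ t) • x ∈ L'`.
    obtain ⟨a, b, hab⟩ := hc
    have h1 : (∏ r ∈ s ∩ t, r) * (∏ r ∈ s \ t, r) = ∏ r ∈ s, r :=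
      Finset.prod_inter_mul_prod_sdiff s t _
    have h2 : (∏ r ∈ s ∩ t, r) * (∏ r ∈ t \ s, r) = ∏ r ∈ t, r := by
      rw [Finset.inter_comm]
      exact Finset.prod_inter_mul_prod_sdiff t s _
    have h3 : (∏ r ∈ s ∩ t, r) ∣ d := by
      refine Finset.prod_dvd_prod_of_subset _ _ _ fun r hr => ?_
      rw [Finset.mem_inter] at hr
      exact hW.mem_toFinset.2 ⟨hs hr.1, ht hr.2⟩
    obtain ⟨c, hc⟩ := h3
    have h4 : d = (c * a) * (∏ r ∈ s, r) + (c * b) * (∏ r ∈ t, r) := by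
      rw [hc, ← h1, ← h2]
      linear_combination (-(∏ r ∈ s ∩ t, r) * c) * hab
    rw [h4, add_smul, mul_smul, mul_smul (c * b)]
    exact add_mem (mem_sup_left (smul_mem _ _ hsx)) (mem_sup_right (smul_mem _ _ htx))
  have : IsNoetherian R ↥(L ⊔ L') := isNoetherian_of_fg_of_noetherian _ (hL.sup hL')
  refine fg_of_fg_map_injective (LinearMap.lsmul R Q d) (fun x y h => ?_)
    (isNoetherian_submodule.1 this _ ?_)
  · exact smul_right_injective Q hd h
  · rintro _ ⟨x, hx, rfl⟩
    exact hdL x hx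

/-- If `H` has free countable submodules and two maps with countable kernels to finitely supported
functions, with denominators from `P i` and from `P' j` respectively, where `P i ∩ P' j` is finite
for `i` outside a countable set, then `H` is free. -/
theorem free_of_two_maps {H ι ι' : Type*} [AddCommGroup H] [Module R H] [Countable K]
    [Module.IsTorsionFree R K] (u : K) (P : ι → Set R) (P' : ι' → Set R) (h0 : ∀ i, 0 ∉ P i)
    (hcop : ∀ i j, ∀ a ∈ P i, ∀ b ∈ P' j, a ≠ b → IsCoprime a b)
    (Δ : Set ι) (hΔ : Δ.Countable) (hfin : ∀ i ∉ Δ, ∀ j, (P i ∩ P' j).Finite)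
    (hfree : ∀ N : Submodule R H, Countable N → Module.Free R N)
    (κ : H →ₗ[R] (ι →₀ K)) (κ' : H →ₗ[R] (ι' →₀ K))
    (hker : (LinearMap.ker κ : Set H).Countable) (hker' : (LinearMap.ker κ' : Set H).Countable)
    (hκ : ∀ x i, HasDen u (P i) (κ x i)) (hκ' : ∀ x i, HasDen u (P' i) (κ' x i)) :
    Module.Free R H := by
  refine free_of_family {N | (∃ D, Δ ⊆ D ∧ N = suppIn κ D) ∧ ∃ D', ∅ ⊆ D' ∧ N = suppIn κ' D'}
    ?_ ?_ ?_
  · obtain ⟨Z, Z', hZ, hΔZ, heq⟩ := exists_closed κ κ' ∅ ∅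
      ⟨⋃ h ∈ (suppIn κ ∅ : Set H), ((κ' h).support : Set ι'),
        (countable_suppIn κ hker countable_empty).biUnion fun h _ => Finset.countable_toSet _,
        fun h hh i hi => Or.inr (mem_iUnion₂.2 ⟨h, hh, hi⟩)⟩
      ⟨⋃ h ∈ (suppIn κ' ∅ : Set H), ((κ h).support : Set ι),
        (countable_suppIn κ' hker' countable_empty).biUnion fun h _ => Finset.countable_toSet _,
        fun h hh i hi => Or.inr (mem_iUnion₂.2 ⟨h, hh, hi⟩)⟩ hΔ
    refine ⟨_, ⟨⟨_, Subset.trans hΔZ subset_union_right, rfl⟩, _, empty_subset _, heq⟩, ?_⟩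
    refine hfree _ (Set.countable_coe_iff.2 (countable_suppIn κ hker ?_))
    rwa [empty_union]
  · intro c hc hne hch
    exact ⟨suppIn_sSup κ Δ c hne hch fun N hN => (hc hN).1,
      suppIn_sSup κ' ∅ c hne hch fun N hN => (hc hN).2⟩
  · rintro N ⟨⟨D, hD, hN⟩, D', -, hN'⟩ htop
    obtain ⟨x, hx⟩ : ∃ x, x ∉ N := by
      by_contra! hcon
      exact htop (top_le_iff.1 fun x _ => hcon x)
    have heq : suppIn κ D = suppIn κ' D' := hN.symm.trans hN'
    obtain ⟨Z, Z', hZ, hxZ, heq'⟩ := exists_closed κ κ' D D'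
      ⟨∅, countable_empty, by rw [union_empty, heq]⟩ ⟨∅, countable_empty, by rw [union_empty, heq]⟩
      (Finset.countable_toSet (κ x).support)
    refine ⟨suppIn κ (D ∪ Z), ⟨⟨_, hD.trans subset_union_left, rfl⟩, _, empty_subset _, heq'⟩,
      lt_of_le_not_ge ?_ fun h => hx (h fun i hi => Or.inr (hxZ hi)), ?_⟩
    · rw [hN]
      exact suppIn_mono κ subset_union_left
    obtain ⟨f, hf, hfκ⟩ := exists_offMap κ D N hN
    obtain ⟨f', hf', hfκ'⟩ := exists_offMap κ' D' N hN'
    have hcount : Countable ((suppIn κ (D ∪ Z)).map N.mkQ) := by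
      refine Set.countable_coe_iff.2 (countable_of_injective_of_countable_image
        (f := f) hf.injOn ((countable_supported (K := K) (hZ.preimage Subtype.val_injective :
          (Subtype.val ⁻¹' Z : Set ↥(Dᶜ)).Countable)).mono ?_))
      rintro _ ⟨_, ⟨h, hh, rfl⟩, rfl⟩ i hi
      have hi : κ h i ≠ 0 := by
        rw [← hfκ]
        exact Finsupp.mem_support_iff.1 hi
      exact (hh (Finsupp.mem_support_iff.2 hi)).resolve_left i.2
    refine free_of_two_embeddings u (fun i : ↥(Dᶜ) => P i) (fun i : ↥(D'ᶜ) => P' i)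
      (fun i => h0 i) (fun i j => hcop i j) (fun i j => hfin i (fun h => i.2 (hD h)) j)
      (f ∘ₗ Submodule.subtype _) (f' ∘ₗ Submodule.subtype _)
      (hf.comp Subtype.val_injective) (hf'.comp Subtype.val_injective) ?_ ?_
    · rintro ⟨_, h, hh, rfl⟩ i
      have := hκ h i
      rwa [← hfκ] at this
    · rintro ⟨_, h, hh, rfl⟩ i
      have := hκ' h i
      rwa [← hfκ'] at this

/-! ### The groups attached to almost disjoint families of sets of primes -/

section Construction

open Filter

open Classical in
theorem HasDen.add {R K : Type*} [CommRing R] [AddCommGroup K] [Module R K] {u : K} {S : Set R}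
    {x y : K} (hx : HasDen u S x) (hy : HasDen u S y) : HasDen u S (x + y) := by
  obtain ⟨s, hs, hsx⟩ := hx
  obtain ⟨t, ht, hty⟩ := hy
  have key : ∀ s' ⊆ s ∪ t, ∀ z : K, (∏ r ∈ s', r) • z ∈ span R {u} →
      (∏ r ∈ s ∪ t, r) • z ∈ span R {u} := by
    intro s' hs' z hz
    obtain ⟨c, hc⟩ := Finset.prod_dvd_prod_of_subset s' (s ∪ t) (fun r => r) hs'
    rw [hc, mul_comm, mul_smul]
    exact smul_mem _ _ hz
  refine ⟨s ∪ t, by rw [Finset.coe_union]; exact union_subset hs ht, ?_⟩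
  rw [smul_add]
  exact add_mem (key s Finset.subset_union_left x hsx) (key t Finset.subset_union_right y hty)

theorem HasDen.neg {R K : Type*} [CommRing R] [AddCommGroup K] [Module R K] {u : K} {S : Set R}
    {x : K} (hx : HasDen u S x) : HasDen u S (-x) := by
  obtain ⟨s, hs, hsx⟩ := hx
  exact ⟨s, hs, by rw [smul_neg]; exact neg_mem hsx⟩

theorem HasDen.zero {R K : Type*} [CommRing R] [AddCommGroup K] [Module R K] (u : K) (S : Set R) :
    HasDen u S (0 : K) := ⟨∅, by simp, by simp⟩

variable {ι : Type*}

open Classical in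
/-- The linear form `q ↦ ∑_{i : n ∈ P i} q i * n!`. -/
noncomputable def evalAt (P : ι → Set ℤ) (n : ℕ) : (ι →₀ ℚ) →ₗ[ℚ] ℚ :=
  Finsupp.linearCombination ℚ fun i => if (n : ℤ) ∈ P i then (n.factorial : ℚ) else 0

/-- The group of pairs `(g, q)` where each `q i` has denominator composed of distinct elements of
`P i` and `g n = evalAt P n q` for all sufficiently large `n`. -/
noncomputable def pairs (P : ι → Set ℤ) : AddSubgroup ((ℕ → ℤ) × (ι →₀ ℚ)) where
  carrier := {x | (∀ i, HasDen (1 : ℚ) (P i) (x.2 i)) ∧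
    ∀ᶠ n in atTop, (x.1 n : ℚ) = evalAt P n x.2}
  zero_mem' := ⟨fun i => HasDen.zero _ _, by simp⟩
  add_mem' := by
    rintro x y ⟨hx, hx'⟩ ⟨hy, hy'⟩
    refine ⟨fun i => (hx i).add (hy i), ?_⟩
    filter_upwards [hx', hy'] with n h1 h2
    simp [h1, h2]
  neg_mem' := by
    rintro x ⟨hx, hx'⟩
    refine ⟨fun i => (hx i).neg, ?_⟩
    filter_upwards [hx'] with n h1
    simp [h1]

/-- The projection `(g, q) ↦ g`. -/
noncomputable def pairsFst (P : ι → Set ℤ) : pairs P →+ (ℕ → ℤ) :=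
  (AddMonoidHom.fst _ _).comp (pairs P).subtype

/-- The projection `(g, q) ↦ q`. -/
noncomputable def pairsSnd (P : ι → Set ℤ) : pairs P →+ (ι →₀ ℚ) :=
  (AddMonoidHom.snd _ _).comp (pairs P).subtype

/-- `P` is a family of infinite, pairwise almost disjoint sets of (positive) primes. -/
structure Admissible (P : ι → Set ℤ) : Prop where
  prime : ∀ i, ∀ p ∈ P i, ∃ n : ℕ, n.Prime ∧ (n : ℤ) = p
  infinite : ∀ i, (P i).Infinite
  almostDisjoint : ∀ i j, i ≠ j → (P i ∩ P j).Finite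

variable {P : ι → Set ℤ}

theorem Admissible.infinite_nat (hP : Admissible P) (i : ι) : {n : ℕ | (n : ℤ) ∈ P i}.Infinite := by
  intro hfin
  refine hP.infinite i ((hfin.image (fun n : ℕ => (n : ℤ))).subset fun p hp => ?_)
  obtain ⟨n, -, rfl⟩ := hP.prime i p hp
  exact ⟨n, hp, rfl⟩

theorem pairsFst_injective (hP : Admissible P) : Function.Injective (pairsFst P) := by
  classical
  rw [injective_iff_map_eq_zero]
  rintro ⟨⟨g, q⟩, hden, hev⟩ hg
  have hg : g = 0 := hg
  subst hg
  have hq : q = 0 := by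
    ext i
    -- For large `n ∈ P i` no other `j` in the support of `q` contributes to `evalAt P n q`.
    have hfin : {n : ℕ | ∃ j ∈ q.support, j ≠ i ∧ (n : ℤ) ∈ P i ∩ P j}.Finite := by
      have : (⋃ j ∈ {j ∈ q.support | j ≠ i}, (P i ∩ P j)).Finite :=
        Set.Finite.biUnion (Finset.finite_toSet _) fun j hj =>
          hP.almostDisjoint i j (Finset.mem_filter.1 hj).2.symm
      refine (this.preimage (f := fun n : ℕ => (n : ℤ)) Nat.cast_injective.injOn).subset ?_
      rintro n ⟨j, hj, hji, hn⟩
      exact mem_iUnion₂.2 ⟨j, Finset.mem_filter.2 ⟨hj, hji⟩, hn⟩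
    have hev2 : ∀ᶠ n in atTop, n ∉ {n : ℕ | ∃ j ∈ q.support, j ≠ i ∧ (n : ℤ) ∈ P i ∩ P j} := by
      rw [← Nat.cofinite_eq_atTop]
      exact hfin.eventually_cofinite_notMem
    obtain ⟨n, hn, hn1, hn2⟩ :=
      ((Nat.frequently_atTop_iff_infinite.2 (hP.infinite_nat i)).and_eventually
        (hev.and hev2)).exists
    have hn : (n : ℤ) ∈ P i := hn
    have h1 : evalAt P n q = q i * n.factorial := by
      rw [evalAt, Finsupp.linearCombination_apply, Finsupp.sum, Finset.sum_eq_single i]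
      · simp [hn]
      · intro j hj hji
        have : (n : ℤ) ∉ P j := fun h => hn2 ⟨j, hj, hji, hn, h⟩
        simp [this]
      · intro h
        simp [Finsupp.notMem_support_iff.1 h]
    simp only [Pi.zero_apply, Int.cast_zero, h1] at hn1
    exact (mul_eq_zero.1 hn1.symm).resolve_right (by positivity)
  subst hq
  rfl

/-- If `q = 0` then `g` has finite support. -/
theorem countable_ker_pairsSnd (P : ι → Set ℤ) : {x : pairs P | pairsSnd P x = 0}.Countable := by
  have hfs : {g : ℕ → ℤ | (Function.support g).Finite}.Countable := by
    refine (countable_range (fun f : ℕ →₀ ℤ => (f : ℕ → ℤ))).mono fun g hg => ?_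
    exact ⟨Finsupp.ofSupportFinite g hg, rfl⟩
  refine countable_of_injective_of_countable_image (f := pairsFst P) ?_ (hfs.mono ?_)
  · intro x hx y hy hxy
    exact Subtype.ext (Prod.ext hxy ((hx : pairsSnd P x = 0).trans (hy : pairsSnd P y = 0).symm))
  · rintro _ ⟨x, hx, rfl⟩
    have hev := x.2.2
    have hx : x.1.2 = 0 := hx
    rw [hx, ← Nat.cofinite_eq_atTop] at hev
    refine Set.Finite.subset hev fun n hn hn' => hn ?_
    have h0 : x.1.1 n = 0 := by simpa using hn'
    exact h0

/-- A lift of `single i (1 / r)`: take `g n = n! / r` for `n ∈ P i`, `n ≥ r`, where the quotient is an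
integer. -/
theorem exists_pairsSnd_eq (i : ι) (r : ℕ) (hr : r ≠ 0) (hden : HasDen (1 : ℚ) (P i) (1 / r)) :
    ∃ x : pairs P, pairsSnd P x = Finsupp.single i (1 / r : ℚ) := by
  classical
  refine ⟨⟨(fun n => if (n : ℤ) ∈ P i ∧ r ≤ n then ((n.factorial / r : ℕ) : ℤ) else 0,
    Finsupp.single i (1 / r)), fun j => ?_, ?_⟩, rfl⟩
  · by_cases hj : i = j
    · subst hj; simpa using hden
    · simpa [Finsupp.single_eq_of_ne' hj] using HasDen.zero _ _
  · filter_upwards [eventually_ge_atTop r] with n hn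
    have hd : r ∣ n.factorial := Nat.dvd_factorial (Nat.pos_of_ne_zero hr) hn
    have hr' : (r : ℚ) ≠ 0 := Nat.cast_ne_zero.2 hr
    by_cases h : (n : ℤ) ∈ P i
    · obtain ⟨k, hk⟩ := hd
      have hdiv : n.factorial / r = k := by
        rw [hk, Nat.mul_div_cancel_left _ (Nat.pos_of_ne_zero hr)]
      have h1 : evalAt P n (Finsupp.single i (1 / r : ℚ)) = k := by
        simp [evalAt, h, hk, hr']
      simp only [h, hn, and_self, if_true, hdiv, h1, Int.cast_natCast]
    · simp [h, evalAt]

theorem hasDen_one (i : ι) : HasDen (1 : ℚ) (P i) (1 / (1 : ℕ)) :=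
  ⟨∅, by simp, by simp⟩

theorem hasDen_inv (i : ι) (p : ℕ) (hp0 : p ≠ 0) (hp : (p : ℤ) ∈ P i) :
    HasDen (1 : ℚ) (P i) (1 / p) := by
  refine ⟨{(p : ℤ)}, by simpa, ?_⟩
  have : (∏ r ∈ {(p : ℤ)}, r) • (1 / p : ℚ) = 1 := by
    have : (p : ℚ) ≠ 0 := Nat.cast_ne_zero.2 hp0
    simp [this]
  rw [this]
  exact mem_span_singleton_self _

theorem not_free_pairs (hP : Admissible P) [Uncountable ι] : ¬ Module.Free ℤ (pairs P) := by
  intro hfree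
  let b := Module.Free.chooseBasis ℤ (pairs P)
  choose x hx using fun i => exists_pairsSnd_eq (P := P) i 1 one_ne_zero (hasDen_one i)
  -- `J` is the set of basis vectors needed to express the kernel of `pairsSnd`.
  let J : Set (Module.Free.ChooseBasisIndex ℤ (pairs P)) :=
    ⋃ k ∈ {x : pairs P | pairsSnd P x = 0}, ((b.repr k).support : Set _)
  have hJ : J.Countable := (countable_ker_pairsSnd P).biUnion fun k _ => Finset.countable_toSet _
  have hxJ : ∀ i, ↑(b.repr (x i)).support ⊆ J := by
    intro i j hj
    by_contra hjJ
    have hker : ∀ k, pairsSnd P k = 0 → b.repr k j = 0 := fun k hk => by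
      by_contra hne
      exact hjJ (mem_iUnion₂.2 ⟨k, hk, Finsupp.mem_support_iff.2 hne⟩)
    -- Modulo the kernel, `x i` is divisible by every `p ∈ P i`; a coordinate outside `J` vanishes on
    -- the kernel, so it would be a nonzero integer with infinitely many prime divisors.
    have hdvd : ∀ p ∈ P i, p ∣ b.repr (x i) j := by
      intro p hp
      obtain ⟨n, hn, rfl⟩ := hP.prime i p hp
      obtain ⟨y, hy⟩ := exists_pairsSnd_eq (P := P) i n hn.ne_zero (hasDen_inv i n hn.ne_zero hp)
      have hk : pairsSnd P (x i - (n : ℤ) • y) = 0 := by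
        have : (n : ℚ) ≠ 0 := Nat.cast_ne_zero.2 hn.ne_zero
        rw [map_sub, map_zsmul, hx, hy, Finsupp.smul_single]
        simp [this]
      have := hker _ hk
      rw [map_sub, map_smul, Finsupp.sub_apply, Finsupp.smul_apply, sub_eq_zero] at this
      exact ⟨_, this⟩
    refine hP.infinite i ((Set.finite_Icc (0 : ℤ) |b.repr (x i) j|).subset fun p hp => ?_)
    obtain ⟨n, hn, rfl⟩ := hP.prime i p hp
    exact ⟨Int.natCast_nonneg n, Int.le_of_dvd (abs_pos.2 (Finsupp.mem_support_iff.1 hj))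
      ((dvd_abs _ _).2 (hdvd _ hp))⟩
  have hxinj : Function.Injective fun i => b.repr (x i) := by
    intro i j hij
    have := b.repr.injective hij
    have h2 := congrArg (pairsSnd P) this
    rw [hx, hx] at h2
    exact Finsupp.single_left_injective (by norm_num) h2
  have : (range fun i => b.repr (x i)).Countable :=
    (countable_supported hJ).mono (by rintro _ ⟨i, rfl⟩; exact hxJ i)
  rw [← image_univ] at this
  exact not_countable (α := ι)
    (countable_univ_iff.1 (countable_of_injective_of_countable_image hxinj.injOn this))

theorem mk_pairs {ι : Type} {P : ι → Set ℤ} (hι : Cardinal.mk ι = Cardinal.aleph 1) :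
    Cardinal.mk (pairs P) = Cardinal.aleph 1 := by
  have hinf : Infinite ι := Cardinal.infinite_iff.2 (hι ▸ Cardinal.aleph0_le_aleph 1)
  refine le_antisymm ?_ ?_
  · have h1 := Cardinal.mk_le_mk_mul_of_mk_preimage_le (c := Cardinal.aleph0) (pairsSnd P)
      fun q => by
        rw [Cardinal.le_aleph0_iff_set_countable]
        rcases (pairsSnd P ⁻¹' {q}).eq_empty_or_nonempty with h | ⟨a, ha⟩
        · rw [h]; exact countable_empty
        · refine ((countable_ker_pairsSnd P).image (a + ·)).mono fun x hx => ?_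
          refine ⟨x - a, ?_, add_sub_cancel a x⟩
          have ha : pairsSnd P a = q := ha
          have hx : pairsSnd P x = q := hx
          simp [ha, hx]
    refine h1.trans ?_
    rw [Cardinal.mk_finsupp_of_infinite, hι, Cardinal.mkRat,
      max_eq_left (Cardinal.aleph0_le_aleph 1)]
    exact (Cardinal.mul_eq_left (Cardinal.aleph0_le_aleph 1) (Cardinal.aleph0_le_aleph 1)
      Cardinal.aleph0_ne_zero).le
  · choose x hx using fun i => exists_pairsSnd_eq (P := P) i 1 one_ne_zero (hasDen_one i)
    rw [← hι]
    refine Cardinal.mk_le_of_injective (f := x) fun i j hij => ?_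
    have h2 := congrArg (pairsSnd P) hij
    rw [hx, hx] at h2
    exact Finsupp.single_left_injective (by norm_num) h2

end Construction

/-! ### A large family of families of sets of primes -/

section Family

/-- The primes attached to the finite initial segments of the branch `c`, under an enumeration of the
finite binary words and of the primes. Distinct branches have almost disjoint sets of primes. -/
noncomputable def branchPrimes (c : ℕ → Bool) : Set ℤ :=
  range fun n : ℕ => ((Nat.nth Nat.Prime (Encodable.encode ((List.range n).map c)) : ℕ) : ℤ)

theorem nth_prime_cast_injective :
    Function.Injective fun n : ℕ => ((Nat.nth Nat.Prime n : ℕ) : ℤ) :=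
  Nat.cast_injective.comp (Nat.nth_injective Nat.infinite_setOfPred_prime)

theorem branchPrimes_prime (c : ℕ → Bool) :
    ∀ p ∈ branchPrimes c, ∃ n : ℕ, n.Prime ∧ (n : ℤ) = p := by
  rintro _ ⟨n, rfl⟩
  exact ⟨_, Nat.nth_mem_of_infinite Nat.infinite_setOfPred_prime _, rfl⟩

theorem branchPrimes_infinite (c : ℕ → Bool) : (branchPrimes c).Infinite := by
  refine infinite_range_of_injective fun m n h => ?_
  have := Encodable.encode_injective (nth_prime_cast_injective h)
  simpa using congrArg List.length this

theorem branchPrimes_inter_finite {c d : ℕ → Bool} (h : c ≠ d) :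
    (branchPrimes c ∩ branchPrimes d).Finite := by
  obtain ⟨k, hk⟩ := Function.ne_iff.1 h
  refine ((finite_Iic k).image fun n : ℕ =>
    ((Nat.nth Nat.Prime (Encodable.encode ((List.range n).map c)) : ℕ) : ℤ)).subset ?_
  rintro _ ⟨⟨m, rfl⟩, ⟨n, hn⟩⟩
  have h1 := Encodable.encode_injective (nth_prime_cast_injective hn)
  have h2 : n = m := by simpa using congrArg List.length h1
  subst h2
  refine ⟨n, ?_, rfl⟩
  by_contra hnk
  refine hk ?_
  have hlt : k < n := not_le.1 hnk
  have h3 := congrArg (fun l => l[k]?) h1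
  simpa [hlt] using h3.symm

/-- There are `2^ℵ₁` many families, indexed by the subsets `X` of a set `W` of cardinality `ℵ₁`, such
that for `X ≠ Y` the sets `P X i` and `P Y j` are almost disjoint for all `j` and all but countably
many `i`. -/
theorem exists_family : ∃ (W : Type) (P : Set W → W → Set ℤ), Cardinal.mk W = Cardinal.aleph 1 ∧
    (∀ X, Admissible (P X)) ∧
    ∀ X Y, X ≠ Y → ∃ Δ : Set W, Δ.Countable ∧ ∀ i ∉ Δ, ∀ j, (P X i ∩ P Y j).Finite := by
  let W : Type := (Cardinal.aleph 1).ord.ToType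
  have hW : Cardinal.mk W = Cardinal.aleph 1 := Cardinal.mk_ord_toType _
  have hIio : ∀ w : W, (Iio w).Countable := fun w => by
    rw [← Cardinal.le_aleph0_iff_set_countable, ← Order.lt_succ_iff, Cardinal.succ_aleph0]
    exact (Cardinal.mk_Iio_lt w (by rw [hW]; exact (Ordinal.type_toType _).symm)).trans_eq hW
  have hIic : ∀ w : W, (Iic w).Countable := fun w => by
    rw [← Iio_insert]
    exact (hIio w).insert w
  choose e he using fun w => countable_iff_exists_injOn.1 (hIio w)
  obtain ⟨j⟩ : Nonempty (W × Set ℕ ↪ (ℕ → Bool)) := by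
    rw [← Cardinal.le_def, Cardinal.mk_prod, Cardinal.lift_id, Cardinal.lift_id, hW]
    have h1 : Cardinal.mk (ℕ → Bool) = Cardinal.continuum := by simp
    have h2 : Cardinal.mk (Set ℕ) = Cardinal.continuum := by simp
    rw [h1, h2]
    exact (Cardinal.mul_eq_right Cardinal.aleph0_le_continuum Cardinal.aleph_one_le_continuum
      (ne_of_gt (Cardinal.aleph_pos 1))).le
  -- `node X w` codes `w` together with the initial segment `X ∩ Iio w`.
  let node : Set W → W → W × Set ℕ := fun X w => (w, e w '' (X ∩ Iio w))
  refine ⟨W, fun X w => branchPrimes (j (node X w)), hW, fun X => ⟨fun i => branchPrimes_prime _,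
    fun i => branchPrimes_infinite _, fun i k hik => branchPrimes_inter_finite fun h => hik ?_⟩, ?_⟩
  · exact congrArg Prod.fst (j.injective h)
  · intro X Y hXY
    refine ⟨{w | node X w = node Y w}, ?_, fun i hi k => branchPrimes_inter_finite fun h => hi ?_⟩
    · obtain ⟨w, hw⟩ : ∃ w, ¬ (w ∈ X ↔ w ∈ Y) := by
        by_contra! hcon
        exact hXY (Set.ext hcon)
      -- Beyond a point `w` where `X` and `Y` differ, all nodes differ.
      refine (hIic w).mono fun v hv => ?_
      by_contra hvw
      have hwv : w < v := not_le.1 fun h => hvw h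
      have himg : e v '' (X ∩ Iio v) = e v '' (Y ∩ Iio v) := congrArg Prod.snd hv
      have hXY' := (he v).image_eq_image_iff inter_subset_right inter_subset_right |>.1 himg
      exact hw ⟨fun hX => (hXY'.subset ⟨hX, hwv⟩).1, fun hY => (hXY'.symm.subset ⟨hY, hwv⟩).1⟩
    · have h' := j.injective h
      have hik : i = k := congrArg Prod.fst h'
      subst hik
      exact h'

end Family

/-! ### Almost disjointness -/

section Final

theorem countable_free_of_injective {H : Type*} [AddCommGroup H] (f : H →+ (ℕ → ℤ))
    (hf : Function.Injective f) (N : Submodule ℤ H) (hN : Countable N) : Module.Free ℤ N :=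
  free_of_injective_pi (f.toIntLinearMap ∘ₗ N.subtype) (hf.comp N.injective_subtype)

theorem Admissible.isCoprime {ι ι' : Type*} {P : ι → Set ℤ} {P' : ι' → Set ℤ} (hP : Admissible P)
    (hP' : Admissible P') (i : ι) (j : ι') : ∀ a ∈ P i, ∀ b ∈ P' j, a ≠ b → IsCoprime a b := by
  intro a ha b hb hab
  obtain ⟨m, hm, rfl⟩ := hP.prime i a ha
  obtain ⟨n, hn, rfl⟩ := hP'.prime j b hb
  exact Nat.isCoprime_iff_coprime.2 ((Nat.coprime_primes hm hn).2 fun h => hab (h ▸ rfl))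

/-- A group embedding in both `pairs P` and `pairs P'` is free if `P` and `P'` are admissible and
almost disjoint from each other apart from countably many indices of `P`. -/
theorem free_of_two_pairs {ι ι' : Type*} {P : ι → Set ℤ} {P' : ι' → Set ℤ}
    (hP : Admissible P) (hP' : Admissible P') {Δ : Set ι} (hΔ : Δ.Countable)
    (hfin : ∀ i ∉ Δ, ∀ j, (P i ∩ P' j).Finite) {H : Type*} [AddCommGroup H]
    (f : H →+ pairs P) (hf : Function.Injective f) (f' : H →+ pairs P')
    (hf' : Function.Injective f') : Module.Free ℤ H := by
  refine free_of_two_maps (1 : ℚ) P P' (fun i h0 => ?_) (hP.isCoprime hP') Δ hΔ hfin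
    (countable_free_of_injective ((pairsFst P).comp f) ((pairsFst_injective hP).comp hf))
    ((pairsSnd P).comp f).toIntLinearMap ((pairsSnd P').comp f').toIntLinearMap ?_ ?_
    (fun x i => (f x).2.1 i) (fun x i => (f' x).2.1 i)
  · obtain ⟨n, hn, h⟩ := hP.prime i 0 h0
    exact hn.ne_zero (by exact_mod_cast h)
  · exact (countable_ker_pairsSnd P).preimage_of_injOn hf.injOn
  · exact (countable_ker_pairsSnd P').preimage_of_injOn hf'.injOn

end Final

end AlmostDisjoint

open AlmostDisjoint in
/-- let `A` be an abelian group containing a subgroup isomorphic to the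
Baer–Specker group `ℤ^ω` (i.e. admitting an injective homomorphism from `ℕ → ℤ`).
Then there is a family of `2^{ℵ₁}` subgroups of `A`, each `ℵ₁`-free (every countable
subgroup is free), of cardinality `ℵ₁` and not free, which are pairwise almost
disjoint. -/
theorem stmt13 (A : Type u) [AddCommGroup A]
    (hA : ∃ φ : (ℕ → ℤ) →+ A, Function.Injective φ) :
    ∃ (I : Type u) (G : I → AddSubgroup A),
      Cardinal.mk I = 2 ^ Cardinal.aleph 1 ∧
      (∀ α, ∀ K : AddSubgroup (G α), Countable K → Module.Free ℤ K) ∧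
      (∀ α, Cardinal.mk (G α) = Cardinal.aleph 1) ∧
      (∀ α, ¬ Module.Free ℤ (G α)) ∧
      (∀ α β, α ≠ β →
        ∀ (H : Type u) [AddCommGroup H],
          (∃ φ : H →+ A, Function.Injective φ ∧ ∀ h, φ h ∈ G α) →
          (∃ ψ : H →+ A, Function.Injective ψ ∧ ∀ h, ψ h ∈ G β) →
          Module.Free ℤ H) := by
  obtain ⟨φ, hφ⟩ := hA
  obtain ⟨W, P, hW, hP, hPP⟩ := exists_family
  have hunc : Uncountable W := by
    rw [← Cardinal.aleph0_lt_mk_iff, hW]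
    exact Cardinal.aleph0_lt_aleph_one
  have hinj : ∀ X, Function.Injective (φ.comp (pairsFst (P X))) := fun X =>
    hφ.comp (pairsFst_injective (hP X))
  let e : ∀ X, pairs (P X) ≃+ (φ.comp (pairsFst (P X))).range := fun X =>
    AddMonoidHom.ofInjective (hinj X)
  refine ⟨ULift.{u} (Set W), fun α => (φ.comp (pairsFst (P α.down))).range, ?_, ?_, ?_, ?_, ?_⟩
  · simp [hW]
  · intro α K hK
    let f := (pairsFst (P α.down)).comp (e α.down).symm.toAddMonoidHom
    exact countable_free_of_injective f
      ((pairsFst_injective (hP _)).comp (e α.down).symm.injective) (AddSubgroup.toIntSubmodule K) hK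
  · intro α
    have := (e α.down).toEquiv.lift_cardinal_eq
    rw [mk_pairs hW] at this
    simpa using this.symm
  · intro α hfree
    exact not_free_pairs (hP α.down) (Module.Free.of_equiv (e α.down).symm.toIntLinearEquiv)
  · rintro α β hαβ H _ ⟨f, hf, hfG⟩ ⟨f', hf', hfG'⟩
    obtain ⟨Δ, hΔ, hfin⟩ := hPP α.down β.down fun h => hαβ (ULift.down_injective h)
    refine free_of_two_pairs (hP α.down) (hP β.down) hΔ hfin
      ((e α.down).symm.toAddMonoidHom.comp (f.codRestrict _ hfG))
      ((e α.down).symm.injective.comp fun x y h => hf (congrArg Subtype.val h))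
      ((e β.down).symm.toAddMonoidHom.comp (f'.codRestrict _ hfG'))
      ((e β.down).symm.injective.comp fun x y h => hf' (congrArg Subtype.val h))
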